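/- arXiv:2103.16458 — 2 statements merged into one kernel-verified Lean document; each statement's English description precedes it below -/
import Mathlib

section
/- Let n ≥ 2, let f : ℂⁿ → ℂ be holomorphic, and let p ∈ ℂⁿ with f(p) ≠ 0 and df(p) = 0 (all first-order complex partial derivatives of f vanish at p). Then for EVERY holomorphic map X from an open neighborhood of p to ℂⁿ with X(p) ≠ 0, and every holomorphic Z : B(0,ε) → ℂⁿ with Z(0) = p, Z′(T) = X(Z(T)), and f(Z(T)) ≠ 0 for all T ∈ B(0,ε), the function h(T) = (1 + |f(Z(T))|²·u(|f(Z(T))|²)²)·|df(Z(T))(X(Z(T)))|² + ‖X(Z(T))‖² satisfies h(0)·(∂∂̄h)(0) − (∂h)(0)·(∂̄h)(0) ≥ 0, i.e., the Gaussian curvature of h(T)|dT|² at T = 0 is ≤ 0. -/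
open Complex Filter Topology Metric
open scoped ComplexOrder

/-- The function `u(t) = (t-1)/(t log t)` for `t ≠ 1`, extended by `u(1) = 1`. -/
noncomputable def u (t : ℝ) : ℝ := if t = 1 then 1 else (t - 1) / (t * Real.log t)

/-- Wirtinger derivative `∂g` of a complex-valued function on `ℂ` (real-differentiable sense). -/
noncomputable def wdz (g : ℂ → ℂ) (z : ℂ) : ℂ :=
  (fderiv ℝ g z 1 - Complex.I * fderiv ℝ g z Complex.I) / 2

/-- Wirtinger derivative `∂̄g` of a complex-valued function on `ℂ`. -/
noncomputable def wdzbar (g : ℂ → ℂ) (z : ℂ) : ℂ :=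
  (fderiv ℝ g z 1 + Complex.I * fderiv ℝ g z Complex.I) / 2

/-- `∂h` for a real-valued `h`. -/
noncomputable def wdzR (h : ℂ → ℝ) : ℂ → ℂ := wdz fun w => (h w : ℂ)

/-- `∂̄h` for a real-valued `h`. -/
noncomputable def wdzbarR (h : ℂ → ℝ) : ℂ → ℂ := wdzbar fun w => (h w : ℂ)

/-- `∂∂̄h` for a real-valued `h`. -/
noncomputable def wlapR (h : ℂ → ℝ) : ℂ → ℂ := wdz (wdzbarR h)

/-- The numerator `h·∂∂̄h − ∂h·∂̄h` of (−1/2 times) the Gaussian curvature of `h|dz|²`. -/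
noncomputable def curvNum (h : ℂ → ℝ) (z : ℂ) : ℂ :=
  (h z : ℂ) * wlapR h z - wdzR h z * wdzbarR h z

/-- The Gaussian curvature `K = −2(h·∂∂̄h − ∂h·∂̄h)/h³` of the conformal metric `h|dz|²`. -/
noncomputable def gaussCurv (h : ℂ → ℝ) (z : ℂ) : ℂ :=
  -2 * curvNum h z / (h z : ℂ) ^ 3

/-- `HW g a b z`: `g` is real differentiable at `z` with `∂g = a`, `∂̄g = b`. -/
def HW (g : ℂ → ℂ) (a b z : ℂ) : Prop :=
  HasFDerivAt g (a • (ContinuousLinearMap.id ℝ ℂ) + b • (Complex.conjCLE : ℂ →L[ℝ] ℂ)) z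

lemma HW.wdz {g : ℂ → ℂ} {a b z : ℂ} (h : HW g a b z) : wdz g z = a := by
  have := h.fderiv
  unfold _root_.wdz
  rw [this]
  simp
  linear_combination (b/2 - a/2) * Complex.I_mul_I

lemma HW.wdzbar {g : ℂ → ℂ} {a b z : ℂ} (h : HW g a b z) : wdzbar g z = b := by
  have := h.fderiv
  unfold _root_.wdzbar
  rw [this]
  simp
  linear_combination (a/2 - b/2) * Complex.I_mul_I

lemma HW.of_diff {g : ℂ → ℂ} {z : ℂ} (h : DifferentiableAt ℝ g z) :
    HW g (_root_.wdz g z) (_root_.wdzbar g z) z := by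
  unfold HW
  refine h.hasFDerivAt.congr_fderiv ?_
  ext v
  have hv : fderiv ℝ g z v = v.re * fderiv ℝ g z 1 + v.im * fderiv ℝ g z Complex.I := by
    conv_lhs => rw [show v = v.re • (1:ℂ) + v.im • Complex.I by simp [Complex.re_add_im]]
    rw [map_add, map_smul, map_smul]
    simp
  have h1 := Complex.re_add_im v
  have h2 : (starRingEnd ℂ) v = v.re - v.im * Complex.I := by
    apply Complex.ext <;> simp
  rw [hv]
  simp only [_root_.wdz, _root_.wdzbar, _root_.add_apply,
    _root_.smul_apply, ContinuousLinearMap.id_apply, smul_eq_mul,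
    ContinuousLinearEquiv.coe_coe, Complex.conjCLE_apply]
  rw [h2]
  nth_rewrite 3 [← h1]
  linear_combination (v.im * fderiv ℝ g z Complex.I) * Complex.I_mul_I

lemma HW.add {g k : ℂ → ℂ} {a b c d z : ℂ} (h : HW g a b z) (h' : HW k c d z) :
    HW (fun w => g w + k w) (a + c) (b + d) z := by
  unfold HW at *
  refine (HasFDerivAt.fun_add h h').congr_fderiv ?_
  ext v; simp; ring

lemma HW.mul {g k : ℂ → ℂ} {a b c d z : ℂ} (h : HW g a b z) (h' : HW k c d z) :
    HW (fun w => g w * k w) (a * k z + g z * c) (b * k z + g z * d) z := by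
  unfold HW at *
  refine (HasFDerivAt.fun_mul h h').congr_fderiv ?_
  ext v; simp; ring

lemma HW.sum {ι : Type*} (s : Finset ι) {g : ι → ℂ → ℂ} {a b : ι → ℂ} {z : ℂ}
    (h : ∀ i ∈ s, HW (g i) (a i) (b i) z) :
    HW (fun w => ∑ i ∈ s, g i w) (∑ i ∈ s, a i) (∑ i ∈ s, b i) z := by
  unfold HW at *
  refine (HasFDerivAt.fun_sum h).congr_fderiv ?_
  ext v
  simp [ContinuousLinearMap.sum_apply, Finset.sum_add_distrib, Finset.sum_mul]

lemma HW.hol {g : ℂ → ℂ} {z : ℂ} (h : DifferentiableAt ℂ g z) : HW g (deriv g z) 0 z := by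
  unfold HW
  refine (h.hasDerivAt.hasFDerivAt.restrictScalars ℝ).congr_fderiv ?_
  ext v; simp [mul_comm]

lemma HW.conj {g : ℂ → ℂ} {z : ℂ} (h : DifferentiableAt ℂ g z) :
    HW (fun w => (starRingEnd ℂ) (g w)) 0 ((starRingEnd ℂ) (deriv g z)) z := by
  unfold HW
  have h1 : HasFDerivAt g _ z := HW.hol h
  refine ((Complex.conjCLE : ℂ →L[ℝ] ℂ).hasFDerivAt.comp z h1).congr_fderiv ?_
  ext v; simp

lemma HW.congr {g k : ℂ → ℂ} {a b z : ℂ} (h : HW g a b z) (e : k =ᶠ[𝓝 z] g) : HW k a b z :=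
  HasFDerivAt.congr_of_eventuallyEq h e

lemma wdzbar_diff {a : ℂ → ℂ} {z : ℂ} (ha : ContDiffAt ℝ 2 a z) :
    DifferentiableAt ℝ (wdzbar a) z := by
  have h1 : DifferentiableAt ℝ (fderiv ℝ a) z :=
    (ha.fderiv_right (m := 1) (by norm_num)).differentiableAt (by norm_num)
  unfold wdzbar
  fun_prop

lemma curv_main (n : ℕ) (h a : ℂ → ℝ) (g : ℂ → ℂ) (Y : Fin n → ℂ → ℂ)
    (ha : ContDiffAt ℝ 2 a 0) (ha0 : 0 ≤ a 0) (hg : AnalyticAt ℂ g 0) (hg0 : g 0 = 0)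
    (hY : ∀ i, AnalyticAt ℂ (Y i) 0)
    (hh : h =ᶠ[𝓝 0] fun T => a T * ‖g T‖ ^ 2 + ∑ i, ‖Y i T‖ ^ 2) :
    0 ≤ curvNum h 0 := by
  set A : ℂ → ℂ := fun T => (a T : ℂ) with hA
  have hAc : ContDiffAt ℝ 2 A 0 := Complex.ofRealCLM.contDiff.contDiffAt.comp 0 ha
  have hH : (fun w => (h w : ℂ)) =ᶠ[𝓝 0] fun T => A T * (g T * (starRingEnd ℂ) (g T))
      + ∑ i, Y i T * (starRingEnd ℂ) (Y i T) := by
    filter_upwards [hh] with T hT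
    rw [hT]; push_cast
    simp only [Complex.mul_conj']; rfl
  have key : ∀ᶠ T in 𝓝 (0:ℂ), HW (fun w => (h w : ℂ))
      (_root_.wdz A T * (g T * (starRingEnd ℂ) (g T))
        + A T * (deriv g T * (starRingEnd ℂ) (g T))
        + ∑ i, deriv (Y i) T * (starRingEnd ℂ) (Y i T))
      (_root_.wdzbar A T * (g T * (starRingEnd ℂ) (g T))
        + A T * (g T * (starRingEnd ℂ) (deriv g T))
        + ∑ i, Y i T * (starRingEnd ℂ) (deriv (Y i) T)) T := by
    have e1 := hAc.eventually (by simp)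
    have e2 := hg.eventually_analyticAt
    have e3 : ∀ᶠ T in 𝓝 (0:ℂ), ∀ i, AnalyticAt ℂ (Y i) T :=
      eventually_all.2 fun i => (hY i).eventually_analyticAt
    filter_upwards [e1, e2, e3, hH.eventuallyEq_nhds] with T t1 t2 t3 t4
    have w1 := HW.of_diff (t1.differentiableAt (by norm_num))
    have w2 := HW.hol t2.differentiableAt
    have w3 := HW.conj t2.differentiableAt
    have w4 := HW.sum Finset.univ (fun i _ =>
      (HW.hol (t3 i).differentiableAt).mul (HW.conj (t3 i).differentiableAt))
    have := ((w1.mul (w2.mul w3)).add w4).congr t4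
    convert this using 2 <;> simp
  have k0 := key.self_of_nhds
  have hbar : wdzbarR h =ᶠ[𝓝 0] fun T => (_root_.wdzbar A T * (g T * (starRingEnd ℂ) (g T))
        + A T * (g T * (starRingEnd ℂ) (deriv g T)))
        + ∑ i, Y i T * (starRingEnd ℂ) (deriv (Y i) T) := by
    filter_upwards [key] with T hT
    exact hT.wdzbar
  have v1 := HW.of_diff (wdzbar_diff hAc)
  have v2 := HW.of_diff (hAc.differentiableAt (by norm_num))
  have v3 := HW.hol hg.differentiableAt
  have v4 := HW.conj hg.differentiableAt
  have v5 := HW.conj hg.deriv.differentiableAt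
  have v6 := HW.sum Finset.univ (fun i _ =>
      (HW.hol (hY i).differentiableAt).mul (HW.conj (hY i).deriv.differentiableAt))
  have hlap := ((((v1.mul (v3.mul v4)).add (v2.mul (v3.mul v5))).add v6).congr hbar).wdz
  have z1 : wdzR h 0 = _ := k0.wdz
  have z2 : wdzbarR h 0 = _ := k0.wdzbar
  have hh0 : (h 0 : ℂ) = _ := hH.self_of_nhds
  unfold curvNum wlapR
  rw [hlap, z1, z2, hh0]
  simp only [hg0, map_zero, mul_zero, zero_mul, add_zero, zero_add]
  set y : EuclideanSpace ℂ (Fin n) := WithLp.toLp 2 fun i => Y i 0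
  set y' : EuclideanSpace ℂ (Fin n) := WithLp.toLp 2 fun i => deriv (Y i) 0
  have i1 : ∑ i, Y i 0 * (starRingEnd ℂ) (Y i 0) = ((‖y‖ ^ 2 : ℝ) : ℂ) := by
    rw [EuclideanSpace.norm_sq_eq]; push_cast
    simp only [Complex.mul_conj']; rfl
  have i2 : ∑ i, deriv (Y i) 0 * (starRingEnd ℂ) (deriv (Y i) 0) = ((‖y'‖ ^ 2 : ℝ) : ℂ) := by
    rw [EuclideanSpace.norm_sq_eq]; push_cast
    simp only [Complex.mul_conj']; rfl
  have i3 : ∑ i, deriv (Y i) 0 * (starRingEnd ℂ) (Y i 0) = inner ℂ y y' := by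
    simp [PiLp.inner_apply, y, y']
  have i4 : ∑ i, Y i 0 * (starRingEnd ℂ) (deriv (Y i) 0) = (starRingEnd ℂ) (inner ℂ y y') := by
    rw [← i3, map_sum]
    refine Finset.sum_congr rfl fun i _ => ?_
    simp [mul_comm]
  rw [i1, i2, i3, i4, Complex.mul_conj', Complex.mul_conj']
  have cs := norm_inner_le_norm (𝕜 := ℂ) y y'
  have : (0:ℝ) ≤ ‖y‖ ^ 2 * (a 0 * ‖deriv g 0‖ ^ 2 + ‖y'‖ ^ 2) - ‖inner ℂ y y'‖ ^ 2 := by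
    have c2 : ‖inner ℂ y y'‖ ^ 2 ≤ (‖y‖ * ‖y'‖) ^ 2 := by gcongr
    have c3 : 0 ≤ ‖y‖ ^ 2 * (a 0 * ‖deriv g 0‖ ^ 2) := by positivity
    nlinarith
  have := Complex.zero_le_real.2 this
  convert this using 1
  push_cast
  rfl

lemma u_eq {t : ℝ} (ht : 0 < t) : u t = (t * dslope Real.log 1 t)⁻¹ := by
  unfold u
  split_ifs with h
  · subst h; simp [dslope_same]
  · rw [dslope_of_ne _ h, slope_def_field]
    simp [div_eq_mul_inv]; ring

lemma dslope_analytic {t : ℝ} (ht : 0 < t) : AnalyticAt ℝ (dslope Real.log 1) t := by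
  by_cases h : t = 1
  · subst h
    obtain ⟨q, hq⟩ := analyticAt_log one_pos
    exact ⟨_, hq.has_fpower_series_dslope_fslope⟩
  · have : dslope Real.log 1 =ᶠ[𝓝 t] fun s => (Real.log s - Real.log 1) / (s - 1) := by
      filter_upwards [isOpen_ne.mem_nhds h] with s hs
      rw [dslope_of_ne _ hs, slope_def_field]
    refine AnalyticAt.congr ?_ this.symm
    exact ((analyticAt_log ht).sub analyticAt_const).div (analyticAt_id.sub analyticAt_const)
      (sub_ne_zero.2 h)

lemma dslope_ne {t : ℝ} (ht : 0 < t) : dslope Real.log 1 t ≠ 0 := by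
  by_cases h : t = 1
  · subst h; simp [dslope_same]
  · rw [dslope_of_ne _ h, slope_def_field]
    simp only [Real.log_one, sub_zero]
    exact div_ne_zero (Real.log_ne_zero_of_pos_of_ne_one ht h) (sub_ne_zero.2 h)

lemma u_analytic {t : ℝ} (ht : 0 < t) : AnalyticAt ℝ u t := by
  have : u =ᶠ[𝓝 t] fun s => (s * dslope Real.log 1 s)⁻¹ := by
    filter_upwards [isOpen_Ioi.mem_nhds ht] with s hs
    exact u_eq hs
  refine AnalyticAt.congr ?_ this.symm
  exact (analyticAt_id.mul (dslope_analytic ht)).inv (mul_ne_zero ht.ne' (dslope_ne ht))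

/-- if `df(p) = 0`, then along every leaf through `p` of every
non-singular holomorphic vector field, the Gaussian curvature of the leafwise
metric at `T = 0` is `≤ 0` (numerator `≥ 0`). -/
theorem stmt2 (n : ℕ) (hn : 2 ≤ n)
    (f : EuclideanSpace ℂ (Fin n) → ℂ) (hf : Differentiable ℂ f)
    (p : EuclideanSpace ℂ (Fin n)) (hfp : f p ≠ 0)
    (hdf : fderiv ℂ f p = 0) :
    ∀ (V : Set (EuclideanSpace ℂ (Fin n))), IsOpen V → p ∈ V →
    ∀ (X : EuclideanSpace ℂ (Fin n) → EuclideanSpace ℂ (Fin n)),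
      DifferentiableOn ℂ X V → X p ≠ 0 →
    ∀ (ε : ℝ), 0 < ε →
    ∀ (Z : ℂ → EuclideanSpace ℂ (Fin n)),
      DifferentiableOn ℂ Z (Metric.ball 0 ε) →
      Z 0 = p →
      (∀ T ∈ Metric.ball (0 : ℂ) ε, Z T ∈ V) →
      (∀ T ∈ Metric.ball (0 : ℂ) ε, deriv Z T = X (Z T)) →
      (∀ T ∈ Metric.ball (0 : ℂ) ε, f (Z T) ≠ 0) →
      0 ≤ curvNum (fun T =>
        (1 + ‖f (Z T)‖ ^ 2 * u (‖f (Z T)‖ ^ 2) ^ 2) *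
          ‖fderiv ℂ f (Z T) (X (Z T))‖ ^ 2 + ‖X (Z T)‖ ^ 2) 0 := by
  intro V hV hpV X hX hXp ε hε Z hZ hZ0 hZV hZ' hfZ
  have hb : ball (0:ℂ) ε ∈ 𝓝 (0:ℂ) := ball_mem_nhds 0 hε
  have hZa : AnalyticAt ℂ Z 0 := hZ.analyticAt hb
  have hFd : DifferentiableOn ℂ (fun T => f (Z T)) (ball 0 ε) := hf.comp_differentiableOn hZ
  have hFa : AnalyticAt ℂ (fun T => f (Z T)) 0 := hFd.analyticAt hb
  have hder : ∀ T ∈ ball (0:ℂ) ε,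
      fderiv ℂ f (Z T) (X (Z T)) = deriv (fun T => f (Z T)) T := by
    intro T hT
    have hz : HasDerivAt Z (deriv Z T) T :=
      (hZ.differentiableAt (isOpen_ball.mem_nhds hT)).hasDerivAt
    rw [← hZ' T hT]
    exact ((hf (Z T)).hasFDerivAt.comp_hasDerivAt T hz).deriv.symm
  refine curv_main n _ (fun T => 1 + ‖f (Z T)‖ ^ 2 * u (‖f (Z T)‖ ^ 2) ^ 2)
    (deriv fun T => f (Z T)) (fun i T => deriv Z T i) ?_ (by positivity) hFa.deriv ?_ ?_ ?_
  · have h1 : ContDiffAt ℝ 2 (fun T => f (Z T)) 0 := hFa.contDiffAt.restrict_scalars ℝ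
    have h2 : ContDiffAt ℝ 2 (fun T => ‖f (Z T)‖ ^ 2) 0 := h1.norm_sq ℝ
    have hpos : 0 < ‖f (Z 0)‖ ^ 2 := by
      have : f (Z 0) ≠ 0 := by rw [hZ0]; exact hfp
      positivity
    have h3 : ContDiffAt ℝ 2 u (‖f (Z 0)‖ ^ 2) := (u_analytic hpos).contDiffAt
    have h4 : ContDiffAt ℝ 2 (fun T => u (‖f (Z T)‖ ^ 2)) 0 := 
      ContDiffAt.comp (f := fun T => ‖f (Z T)‖ ^ 2) (0:ℂ) h3 h2
    exact contDiffAt_const.add (h2.mul (h4.pow 2))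
  · rw [← hder 0 (mem_ball_self hε), hZ0, hdf]; rfl
  · intro i
    exact ((EuclideanSpace.proj i : EuclideanSpace ℂ (Fin n) →L[ℂ] ℂ).analyticAt _).comp hZa.deriv
  · filter_upwards [hb] with T hT
    rw [hder T hT, EuclideanSpace.norm_sq_eq, hZ' T hT]
end

section
/- Let f : ℂ → ℂ be a nonconstant holomorphic (entire) function, and define h(z) = |f′(z)|²·(1 + |f(z)|²·u(|f(z)|²)²) + 1 on ℂ∖f⁻¹(0), with K the Gaussian curvature of h(z)|dz|². If p ∈ ℂ satisfies f(p) = 0, then K(z) → −4 as z → p with z ranging over ℂ∖f⁻¹(0). -/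
open Complex Filter Topology Metric
open scoped ComplexOrder

/-- Wirtinger differentiability. -/
def HasW (g : ℂ → ℂ) (A B : ℂ) (z : ℂ) : Prop :=
  HasFDerivAt g (A • (ContinuousLinearMap.id ℝ ℂ) + B • (Complex.conjCLE : ℂ →L[ℝ] ℂ)) z

lemma HasW.wdz_eq {g : ℂ → ℂ} {A B z : ℂ} (h : HasW g A B z) : wdz g z = A := by
  unfold wdz
  rw [HasFDerivAt.fderiv h]
  simp
  linear_combination (-A/2 + B/2) * Complex.I_sq

lemma HasW.wdzbar_eq {g : ℂ → ℂ} {A B z : ℂ} (h : HasW g A B z) : wdzbar g z = B := by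
  unfold wdzbar
  rw [HasFDerivAt.fderiv h]
  simp
  linear_combination (A/2 - B/2) * Complex.I_sq

lemma HasW.mul {g k : ℂ → ℂ} {A B C D z : ℂ} (hg : HasW g A B z) (hk : HasW k C D z) :
    HasW (fun w => g w * k w) (A * k z + g z * C) (B * k z + g z * D) z := by
  unfold HasW at *
  refine (HasFDerivAt.mul hg hk).congr_fderiv ?_
  ext v <;> simp <;> ring

lemma HasW.add {g k : ℂ → ℂ} {A B C D z : ℂ} (hg : HasW g A B z) (hk : HasW k C D z) :
    HasW (fun w => g w + k w) (A + C) (B + D) z := by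
  unfold HasW at *
  refine (HasFDerivAt.add hg hk).congr_fderiv ?_
  ext v <;> simp <;> ring

lemma HasW.const (c z : ℂ) : HasW (fun _ => c) 0 0 z := by
  unfold HasW
  refine (hasFDerivAt_const c z).congr_fderiv ?_
  ext v <;> simp

lemma HasW.holo {g : ℂ → ℂ} {A z : ℂ} (hg : HasDerivAt g A z) : HasW g A 0 z := by
  unfold HasW
  refine (hg.hasFDerivAt.restrictScalars ℝ).congr_fderiv ?_
  ext v <;> simp [mul_comm]

lemma HasW.conj {g : ℂ → ℂ} {A B z : ℂ} (hg : HasW g A B z) :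
    HasW (fun w => (starRingEnd ℂ) (g w)) ((starRingEnd ℂ) B) ((starRingEnd ℂ) A) z := by
  unfold HasW at *
  refine ((Complex.conjCLE : ℂ →L[ℝ] ℂ).hasFDerivAt.comp z hg).congr_fderiv ?_
  ext v <;> simp [add_comm]

lemma HasW.real {f : ℂ → ℂ} {a z : ℂ} (hf : HasDerivAt f a z) {φ : ℝ → ℝ} {d : ℝ}
    (hφ : HasDerivAt φ d (‖f z‖ ^ 2)) :
    HasW (fun w => ((φ (‖f w‖ ^ 2) : ℝ) : ℂ)) (d * (a * (starRingEnd ℂ) (f z)))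
      (d * ((starRingEnd ℂ) a * f z)) z := by
  have h1 := (HasW.holo hf).mul (HasW.holo hf).conj
  have h2 := (Complex.reCLM.hasFDerivAt.comp z h1)
  have h3 : (⇑Complex.reCLM ∘ fun w => f w * (starRingEnd ℂ) (f w)) = fun w => ‖f w‖ ^ 2 := by
    funext w
    simp [Complex.mul_conj, Complex.normSq_eq_norm_sq, ← Complex.ofReal_pow]
  rw [h3] at h2
  have h4 := Complex.ofRealCLM.hasFDerivAt.comp z (hφ.comp_hasFDerivAt z h2)
  unfold HasW
  refine h4.congr_fderiv ?_
  ext v <;> apply Complex.ext <;> simp <;> ring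

noncomputable def P0 (t : ℝ) : ℝ := t * u t ^ 2
noncomputable def P1 (t : ℝ) : ℝ :=
  ((t ^ 2 - 1) - 2 * (t - 1) ^ 2 / Real.log t) / (t ^ 2 * Real.log t ^ 2)
noncomputable def P2 (t : ℝ) : ℝ :=
  ((((t ^ 2 + 1) - 4 * (t ^ 2 - 1) / Real.log t + 6 * (t - 1) ^ 2 / Real.log t ^ 2)
    / (t ^ 2 * Real.log t ^ 2)) - P1 t) / t

lemma P0_eq {t : ℝ} (h0 : 0 < t) (h1 : t < 1) :
    P0 t = (t - 1) ^ 2 / (t * Real.log t ^ 2) := by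
  have := Real.log_neg h0 h1
  have hL := this.ne
  have := h0.ne'
  unfold P0 u
  rw [if_neg h1.ne]
  field_simp

lemma P0_deriv {t : ℝ} (h0 : 0 < t) (h1 : t < 1) : HasDerivAt P0 (P1 t) t := by
  have hL := (Real.log_neg h0 h1).ne
  have ht := h0.ne'
  have hl := Real.hasDerivAt_log ht
  have : HasDerivAt (fun t : ℝ => (t - 1) ^ 2 / (t * Real.log t ^ 2)) (P1 t) t := by
    refine ((((hasDerivAt_id t).sub_const 1).pow 2).div
      ((hasDerivAt_id t).mul (hl.pow 2)) (by simp [ht, hL])).congr_deriv ?_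
    simp [P1]
    field_simp
    ring
  refine this.congr_of_eventuallyEq ?_
  filter_upwards [Ioo_mem_nhds h0 h1] with s hs using P0_eq hs.1 hs.2

lemma P1_deriv {t : ℝ} (h0 : 0 < t) (h1 : t < 1) : HasDerivAt P1 (P2 t) t := by
  have hL := (Real.log_neg h0 h1).ne
  have ht := h0.ne'
  have hl := Real.hasDerivAt_log ht
  unfold P1
  refine (((((hasDerivAt_id t).pow 2).sub_const 1).sub
    (((((hasDerivAt_id t).sub_const 1).pow 2).const_mul 2).div hl hL)).div
      (((hasDerivAt_id t).pow 2).mul (hl.pow 2)) (by simp [ht, hL])).congr_deriv ?_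
  simp [P2, P1]
  field_simp
  ring

/-- The metric. -/
noncomputable def hh (f : ℂ → ℂ) : ℂ → ℝ := fun z =>
  ‖deriv f z‖ ^ 2 * (1 + ‖f z‖ ^ 2 * u (‖f z‖ ^ 2) ^ 2) + 1

lemma hh_eq (f : ℂ → ℂ) (z : ℂ) : ((hh f z : ℝ) : ℂ) =
    (deriv f z * (starRingEnd ℂ) (deriv f z)) * (1 + ((P0 (‖f z‖ ^ 2) : ℝ) : ℂ)) + 1 := by
  rw [Complex.mul_conj, Complex.normSq_eq_norm_sq]
  simp [hh, P0]

lemma hh_W (f : ℂ → ℂ) (hf : Differentiable ℂ f) (z : ℂ) (h0 : 0 < ‖f z‖ ^ 2)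
    (h1 : ‖f z‖ ^ 2 < 1) (a b F : ℂ) (ha : deriv f z = a) (hb : deriv (deriv f) z = b)
    (hF : f z = F) :
    HasW (fun w => ((hh f w : ℝ) : ℂ))
      (b * (starRingEnd ℂ) a * (1 + P0 (‖f z‖ ^ 2)) +
        a ^ 2 * (starRingEnd ℂ) a * (starRingEnd ℂ) F * P1 (‖f z‖ ^ 2))
      (a * (starRingEnd ℂ) b * (1 + P0 (‖f z‖ ^ 2)) +
        a * (starRingEnd ℂ) a ^ 2 * F * P1 (‖f z‖ ^ 2)) z := by
  have hd : Differentiable ℂ (deriv f) := by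
    simpa using (hf.contDiff (n := 2)).differentiable_deriv_two
  have e1 : HasDerivAt f a z := ha ▸ (hf z).hasDerivAt
  have e2 : HasDerivAt (deriv f) b z := hb ▸ (hd z).hasDerivAt
  have := (((HasW.holo e2).mul (HasW.holo e2).conj).mul
    ((HasW.const 1 z).add (HasW.real e1 (P0_deriv h0 h1)))).add (HasW.const 1 z)
  simp_rw [← hh_eq] at this
  convert this using 1
  · simp [ha, hF]; ring
  · simp [ha, hF]; ring

lemma wlap_hh (f : ℂ → ℂ) (hf : Differentiable ℂ f) (z : ℂ) (h0 : 0 < ‖f z‖ ^ 2)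
    (h1 : ‖f z‖ ^ 2 < 1) (a b F : ℂ) (ha : deriv f z = a) (hb : deriv (deriv f) z = b)
    (hF : f z = F) :
    wlapR (hh f) z = b * (starRingEnd ℂ) b * (1 + P0 (‖f z‖ ^ 2))
      + a ^ 2 * (starRingEnd ℂ) b * (starRingEnd ℂ) F * P1 (‖f z‖ ^ 2)
      + (starRingEnd ℂ) a ^ 2 * b * F * P1 (‖f z‖ ^ 2)
      + (a * (starRingEnd ℂ) a) ^ 2 * (P1 (‖f z‖ ^ 2)
        + F * (starRingEnd ℂ) F * P2 (‖f z‖ ^ 2)) := by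
  have hd : Differentiable ℂ (deriv f) := by
    simpa using (hf.contDiff (n := 2)).differentiable_deriv_two
  have hd2 : Differentiable ℂ (deriv (deriv f)) := by
    simpa using (hd.contDiff (n := 2)).differentiable_deriv_two
  have e1 : HasDerivAt f a z := ha ▸ (hf z).hasDerivAt
  have e2 : HasDerivAt (deriv f) b z := hb ▸ (hd z).hasDerivAt
  have e3 : HasDerivAt (deriv (deriv f)) _ z := (hd2 z).hasDerivAt
  have ev : wdzbarR (hh f) =ᶠ[𝓝 z] fun w =>
      deriv f w * (starRingEnd ℂ) (deriv (deriv f) w) * (1 + ((P0 (‖f w‖ ^ 2) : ℝ) : ℂ)) +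
        deriv f w * ((starRingEnd ℂ) (deriv f w) * (starRingEnd ℂ) (deriv f w)) * f w *
          ((P1 (‖f w‖ ^ 2) : ℝ) : ℂ) := by
    have hc : Continuous (fun w => ‖f w‖ ^ 2) := by
      have := hf.continuous
      fun_prop
    filter_upwards [hc.continuousAt.preimage_mem_nhds (Ioo_mem_nhds h0 h1)] with w hw
    have := (hh_W f hf w hw.1 hw.2 _ _ _ rfl rfl rfl).wdzbar_eq
    rw [wdzbarR, this]
    ring
  have W := (((HasW.holo e2).mul (HasW.holo e3).conj).mul
    ((HasW.const 1 z).add (HasW.real e1 (P0_deriv h0 h1)))).add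
    ((((HasW.holo e2).mul ((HasW.holo e2).conj.mul (HasW.holo e2).conj)).mul (HasW.holo e1)).mul
      (HasW.real e1 (P1_deriv h0 h1)))
  have W2 := HasFDerivAt.congr_of_eventuallyEq W ev
  have := HasW.wdz_eq W2
  rw [wlapR, this]
  simp [ha, hb, hF]
  ring

lemma curv_hh (f : ℂ → ℂ) (hf : Differentiable ℂ f) (z : ℂ) (h0 : 0 < ‖f z‖ ^ 2)
    (h1 : ‖f z‖ ^ 2 < 1) (ha : deriv f z ≠ 0) (q e : ℂ) (hq : f z = q * deriv f z)
    (he : deriv (deriv f) z * f z = deriv f z ^ 2 * e)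
    (t L Q : ℝ) (ht : t = ‖f z‖ ^ 2) (hL : L = Real.log t) (hQ : Q = ‖q‖ ^ 2) :
    gaussCurv (hh f) z = -2 * (2 * (t - 1) ^ 4 - 2 * (t * L ^ 2) * (t - 1) ^ 2 +
      (t * L ^ 4) * ((t ^ 2 + 1) - 4 * (t ^ 2 - 1) * L⁻¹ + 6 * (t - 1) ^ 2 * L⁻¹ ^ 2)
      + e * (starRingEnd ℂ) e * ((t - 1) ^ 2 + t * L ^ 2) * (Q * L ^ 4)
      + (e + (starRingEnd ℂ) e) * ((t ^ 2 - 1) - 2 * (t - 1) ^ 2 * L⁻¹) * (Q * L ^ 4)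
      + ((t ^ 2 + 1) - 4 * (t ^ 2 - 1) * L⁻¹ + 6 * (t - 1) ^ 2 * L⁻¹ ^ 2) * (Q * L ^ 4)) /
      ((t - 1) ^ 2 + t * L ^ 2 + Q * L ^ 2) ^ 3 := by
  have hLn : L ≠ 0 := by
    rw [hL, ht]; exact (Real.log_neg h0 h1).ne
  have htn : t ≠ 0 := by rw [ht]; exact h0.ne'
  obtain ⟨a, haa⟩ : ∃ a, deriv f z = a := ⟨_, rfl⟩
  obtain ⟨b, hb⟩ : ∃ b, deriv (deriv f) z = b := ⟨_, rfl⟩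
  obtain ⟨F, hF⟩ : ∃ F, f z = F := ⟨_, rfl⟩
  have W := hh_W f hf z h0 h1 a b F haa hb hF
  have wl := wlap_hh f hf z h0 h1 a b F haa hb hF
  have hz := hh_eq f z
  have w1 : wdzR (hh f) z = _ := W.wdz_eq
  have w2 : wdzbarR (hh f) z = _ := W.wdzbar_eq
  have ht' : (t : ℂ) = F * (starRingEnd ℂ) F := by
    rw [Complex.mul_conj, Complex.normSq_eq_norm_sq, ht, hF]
  have hQ' : (Q : ℂ) = q * (starRingEnd ℂ) q := by
    rw [Complex.mul_conj, Complex.normSq_eq_norm_sq, hQ]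
  have p0 := P0_eq h0 h1
  rw [← ht, ← hL] at p0
  have p1 : P1 t = ((t ^ 2 - 1) - 2 * (t - 1) ^ 2 / L) / (t ^ 2 * L ^ 2) := by rw [hL]; rfl
  have p2 : P2 t = ((((t ^ 2 + 1) - 4 * (t ^ 2 - 1) / L + 6 * (t - 1) ^ 2 / L ^ 2)
    / (t ^ 2 * L ^ 2)) - P1 t) / t := by rw [hL]; rfl
  rw [p1] at p2
  unfold gaussCurv curvNum
  rw [w1, w2, wl, hz, ← ht, p0, p1, p2]
  rw [haa] at ha hq he ⊢
  rw [hF] at hq he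
  rw [hb] at he
  have hqn : q ≠ 0 := by
    rintro rfl
    apply htn
    rw [ht, hF, hq]; simp
  have hb' : b = a * e / q := by
    rw [hq] at he
    field_simp
    apply mul_right_cancel₀ ha
    linear_combination he
  have ha' : (starRingEnd ℂ) a ≠ 0 := by simpa using ha
  have hq' : (starRingEnd ℂ) q ≠ 0 := by simpa using hqn
  have hLc : (L : ℂ) ≠ 0 := by exact_mod_cast hLn
  have htc : (t : ℂ) ≠ 0 := by exact_mod_cast htn
  have hden : ((t : ℂ) - 1) ^ 2 + t * L ^ 2 + Q * L ^ 2 ≠ 0 := by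
    have : 0 < (t - 1) ^ 2 + t * L ^ 2 + Q * L ^ 2 := by
      have : 0 < t := ht ▸ h0
      have : 0 ≤ Q := hQ ▸ by positivity
      positivity
    exact_mod_cast this.ne'
  -- alpha
  set ca := (starRingEnd ℂ) a with hca
  set cq := (starRingEnd ℂ) q with hcq
  set ce := (starRingEnd ℂ) e with hce
  have hcF : (starRingEnd ℂ) F = cq * ca := by rw [hq]; simp [hca, hcq]
  have hcb : (starRingEnd ℂ) b = ca * ce / cq := by rw [hb']; simp [hca, hcq, hce]
  have hT : (t : ℂ) = q * cq * (a * ca) := by rw [ht', hcF, hq]; ring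
  have hH : a * ca * (1 + (((t - 1) ^ 2 / (t * L ^ 2) : ℝ) : ℂ)) + 1 =
      (a * ca) / (t * L ^ 2) * (((t : ℂ) - 1) ^ 2 + t * L ^ 2 + Q * L ^ 2) := by
    push_cast
    rw [hQ']
    field_simp
    linear_combination (L : ℂ) ^ 2 * hT
  rw [hH]
  have hN : ∀ N M D c : ℂ, c ≠ 0 → D ≠ 0 → N = c ^ 3 * M → -2 * N / (c * D) ^ 3 = -2 * M / D ^ 3 := by
    intro N M D c hc hD h
    rw [h]; field_simp
  refine hN _ _ _ _ (by simp [ha, ha', htc, hLc]) hden ?_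
  have hA : a = t / (q * cq * ca) := by
    rw [hT]; field_simp
  rw [hcb, hcF, hb', hq, hQ']
  push_cast
  rw [hA]
  field_simp
  ring

lemma local_form (f : ℂ → ℂ) (hf : Differentiable ℂ f)
    (hfnc : ¬ ∃ c : ℂ, ∀ z, f z = c) (p : ℂ) (hfp : f p = 0) :
    ∃ (q : ℂ → ℂ) (n : ℕ) (C : ℝ), AnalyticAt ℂ q p ∧
      (∀ᶠ z in 𝓝 p, f z = q z * deriv f z ∧ ‖q z‖ ^ (n + 1) ≤ C * ‖f z‖ ∧
        (f z ≠ 0 → deriv f z ≠ 0) ∧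
        deriv (deriv f) z * f z = deriv f z ^ 2 * (1 - deriv q z)) := by
  have hd : Differentiable ℂ (deriv f) := by
    simpa using (hf.contDiff (n := 2)).differentiable_deriv_two
  have han : AnalyticAt ℂ f p := hf.analyticAt p
  have hne : ¬ ∀ᶠ z in 𝓝 p, f z = 0 := by
    intro h
    apply hfnc
    refine ⟨0, fun z => ?_⟩
    have h1 : AnalyticOnNhd ℂ f Set.univ := fun z _ => hf.analyticAt z
    have := h1.eqOn_zero_of_preconnected_of_eventuallyEq_zero isPreconnected_univ
      (Set.mem_univ p) h
    exact this (Set.mem_univ z)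
  obtain ⟨m, g, hg, hgp, hfg⟩ := han.exists_eventuallyEq_pow_smul_nonzero_iff.mpr hne
  obtain ⟨n, rfl⟩ : ∃ n, m = n + 1 := by
    rcases m with _ | n
    · have := hfg.self_of_nhds
      simp [hfp] at this
      exact absurd this.symm hgp
    · exact ⟨n, rfl⟩
  let k : ℂ → ℂ := fun z => (n + 1) * g z + (z - p) * deriv g z
  have hk : AnalyticAt ℂ k p := by
    have := hg.deriv
    fun_prop
  have hkp : k p ≠ 0 := by
    simp only [k, sub_self, zero_mul, add_zero]
    exact mul_ne_zero (by exact_mod_cast n.succ_ne_zero) hgp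
  have hdf : ∀ᶠ z in 𝓝 p, deriv f z = (z - p) ^ n * k z := by
    filter_upwards [hfg.eventually_nhds, hg.eventually_analyticAt] with z hz hgz
    have h1 : HasDerivAt (fun z => (z - p) ^ (n + 1) • g z)
        ((z - p) ^ n * k z) z := by
      refine ((((hasDerivAt_id z).sub_const p).pow (n + 1)).smul
        hgz.differentiableAt.hasDerivAt).congr_deriv ?_
      simp [k]
      ring
    exact (h1.congr_of_eventuallyEq hz).deriv
  let q : ℂ → ℂ := fun z => (z - p) * g z / k z
  have hq : AnalyticAt ℂ q p := by
    have : AnalyticAt ℂ (fun z => (z - p) * g z) p := by fun_prop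
    exact this.div hk hkp
  have hkn : ∀ᶠ z in 𝓝 p, k z ≠ 0 := hk.continuousAt.eventually_ne hkp
  have hfq : ∀ᶠ z in 𝓝 p, f z = q z * deriv f z := by
    filter_upwards [hfg, hdf, hkn] with z h1 h2 h3
    rw [h1, h2]
    simp only [q, smul_eq_mul]
    field_simp
    ring
  let G : ℂ → ℂ := fun z => g z ^ n / k z ^ (n + 1)
  have hG : ContinuousAt G p :=
    (hg.continuousAt.pow n).div (hk.continuousAt.pow (n + 1)) (pow_ne_zero _ hkp)
  refine ⟨q, n, ‖G p‖ + 1, hq, ?_⟩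
  have hGb : ∀ᶠ z in 𝓝 p, ‖G z‖ < ‖G p‖ + 1 :=
    hG.norm.eventually_lt continuousAt_const (by simp)
  filter_upwards [hfg, hdf, hkn, hfq, hfq.eventually_nhds, hGb, hq.eventually_analyticAt]
    with z h1 h2 h3 h4 h5 h6 h7
  refine ⟨h4, ?_, ?_, ?_⟩
  · have : q z ^ (n + 1) = G z * f z := by
      rw [h1]
      simp only [q, G, smul_eq_mul, div_pow, mul_pow]
      field_simp
      try ring
    rw [← norm_pow, this, norm_mul]
    gcongr
  · intro h h'
    rw [h4, h'] at h
    simp at h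
  · have := (h7.differentiableAt.hasDerivAt.mul (hd z).hasDerivAt).congr_of_eventuallyEq h5
    have := this.deriv
    rw [h4]
    linear_combination -deriv f z * this

lemma tlog (k : ℕ) : Tendsto (fun t : ℝ => t * Real.log t ^ k) (𝓝[>] 0) (𝓝 0) := by
  have := (isLittleO_abs_log_rpow_rpow_nhdsGT_zero (k : ℝ) (show (-1 : ℝ) < 0 by norm_num)).tendsto_div_nhds_zero
  rw [tendsto_zero_iff_norm_tendsto_zero] at this ⊢
  refine this.congr' ?_
  filter_upwards [self_mem_nhdsWithin] with t ht
  have ht : 0 < t := ht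
  simp [Real.rpow_neg_one, abs_of_pos ht, mul_comm]

lemma root_lim {l : Filter ℂ} {x : ℂ → ℝ} (hx : ∀ z, 0 ≤ x z) (n : ℕ)
    (h : Tendsto (fun z => x z ^ (n + 1)) l (𝓝 0)) : Tendsto x l (𝓝 0) := by
  have h1 := h.rpow_const (p := ((n + 1 : ℕ) : ℝ)⁻¹) (Or.inr (by positivity))
  rw [Real.zero_rpow (by positivity)] at h1
  refine h1.congr fun z => ?_
  exact Real.pow_rpow_inv_natCast (hx z) n.succ_ne_zero

/-- for a nonconstant entire `f` and `p` with `f(p) = 0`, the Gaussian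
curvature of `h|dz|²` tends to `−4` as `z → p` within `ℂ ∖ f⁻¹(0)`. -/
theorem stmt8 (f : ℂ → ℂ) (hf : Differentiable ℂ f)
    (hfnc : ¬ ∃ c : ℂ, ∀ z, f z = c)
    (p : ℂ) (hfp : f p = 0) :
    Tendsto (gaussCurv (fun z =>
        ‖deriv f z‖ ^ 2 * (1 + ‖f z‖ ^ 2 * u (‖f z‖ ^ 2) ^ 2) + 1))
      (𝓝[(f ⁻¹' {0})ᶜ] p) (𝓝 (-4)) := by
  obtain ⟨q, n, C, hq, hev⟩ := local_form f hf hfnc p hfp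
  set l := 𝓝[(f ⁻¹' {0})ᶜ] p with hl
  have hev' := hev.filter_mono (nhdsWithin_le_nhds (s := (f ⁻¹' {0})ᶜ))
  rw [← hl] at hev'
  have hmem : ∀ᶠ z in l, f z ≠ 0 := by
    filter_upwards [self_mem_nhdsWithin] with z hz
    simpa using hz
  let T : ℂ → ℝ := fun z => ‖f z‖ ^ 2
  let L : ℂ → ℝ := fun z => Real.log (T z)
  let Q : ℂ → ℝ := fun z => ‖q z‖ ^ 2
  have hT0 : Tendsto T l (𝓝 0) := by
    have : ContinuousAt T p := by
      have := hf.continuous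
      exact Continuous.continuousAt (by fun_prop)
    have h2 := this.tendsto.mono_left (nhdsWithin_le_nhds (s := (f ⁻¹' {0})ᶜ))
    simpa [T, hfp] using h2
  have hT : Tendsto T l (𝓝[>] 0) := by
    refine tendsto_nhdsWithin_iff.mpr ⟨hT0, ?_⟩
    filter_upwards [hmem] with z hz
    have : 0 < ‖f z‖ := norm_pos_iff.mpr hz
    exact pow_pos this 2
  have hTL : ∀ k : ℕ, Tendsto (fun z => T z * L z ^ k) l (𝓝 0) := fun k => (tlog k).comp hT
  have hLi : Tendsto (fun z => (L z)⁻¹) l (𝓝 0) :=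
    tendsto_inv_atBot_zero.comp (Real.tendsto_log_nhdsGT_zero.comp hT)
  have hQL : Tendsto (fun z => Q z * L z ^ 4) l (𝓝 0) := by
    refine root_lim (fun z => by positivity) n ?_
    have h1 := (hTL (4 * (n + 1))).const_mul (C ^ 2)
    rw [mul_zero] at h1
    refine squeeze_zero' (Eventually.of_forall fun z => by positivity) ?_ h1
    filter_upwards [hev'] with z hz
    have h2 := pow_le_pow_left₀ (by positivity) hz.2.1 2
    have h3 : (0 : ℝ) ≤ L z ^ (4 * (n + 1)) := by
      rw [pow_mul]; positivity
    calc (Q z * L z ^ 4) ^ (n + 1) = (‖q z‖ ^ (n + 1)) ^ 2 * L z ^ (4 * (n + 1)) := by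
          simp only [Q]; ring
      _ ≤ (C * ‖f z‖) ^ 2 * L z ^ (4 * (n + 1)) := by gcongr
      _ = _ := by simp only [T]; ring
  have hlt : ∀ᶠ z in l, T z < 1 := hT0.eventually_lt_const one_pos
  have hQL2 : Tendsto (fun z => Q z * L z ^ 2) l (𝓝 0) := by
    have := hQL.mul (hLi.pow 2)
    simp only [mul_zero, zero_mul] at this
    refine this.congr' ?_
    filter_upwards [hmem, hlt] with z h1 h2
    have h0 : 0 < T z := pow_pos (norm_pos_iff.mpr h1) 2
    have : L z ≠ 0 := (Real.log_neg h0 h2).ne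
    field_simp
  have he : Tendsto (fun z => 1 - deriv q z) l (𝓝 (1 - deriv q p)) :=
    (hq.deriv.continuousAt.tendsto.mono_left nhdsWithin_le_nhds).const_sub 1
  have hce := (Complex.continuous_conj.tendsto _).comp he
  have cT := (Complex.continuous_ofReal.tendsto _).comp hT0
  have cTL2 := (Complex.continuous_ofReal.tendsto _).comp (hTL 2)
  have cTL4 := (Complex.continuous_ofReal.tendsto _).comp (hTL 4)
  have cLi := (Complex.continuous_ofReal.tendsto _).comp hLi
  have cQ4 := (Complex.continuous_ofReal.tendsto _).comp hQL
  have cQ2 := (Complex.continuous_ofReal.tendsto _).comp hQL2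
  have Z := (((cT.pow 2).add_const 1).sub ((((cT.pow 2).sub_const 1).const_mul 4).mul cLi)).add
    ((((cT.sub_const 1).pow 2).const_mul 6).mul (cLi.pow 2))
  have Y := ((cT.pow 2).sub_const 1).sub ((((cT.sub_const 1).pow 2).const_mul 2).mul cLi)
  have X := ((cT.sub_const 1).pow 2).add cTL2
  have M := ((((((cT.sub_const 1).pow 4).const_mul 2).sub
    ((cTL2.const_mul 2).mul ((cT.sub_const 1).pow 2))).add (cTL4.mul Z)).add
    (((he.mul hce).mul X).mul cQ4)).add (((he.add hce).mul Y).mul cQ4) |>.add (Z.mul cQ4)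
  have D := (X.add cQ2).pow 3
  have R := (M.const_mul (-2)).div D (by simp)
  refine Tendsto.congr' ?_ (R.trans (le_of_eq (congrArg 𝓝 ?_)))
  · filter_upwards [hmem, hlt, hev'] with z h1 h2 h3
    have h0 : 0 < T z := pow_pos (norm_pos_iff.mpr h1) 2
    have := curv_hh f hf z h0 h2 (h3.2.2.1 h1) (q z) (1 - deriv q z) h3.1 h3.2.2.2
      (T z) (L z) (Q z) rfl rfl rfl
    refine Eq.trans ?_ this.symm
    simp
  · simp; norm_num
end
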